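/- arXiv:1410.2011 — 4 statements merged into one kernel-verified Lean document; each statement's English description precedes it below -/
import Mathlib

section
/- Let 𝔞 be an ideal of ℤ[x_1, …, x_n] such that R = ℤ[x_1, …, x_n]/𝔞 is a free, finitely generated ℤ-module of rank N ≥ 1. Then 𝔞 is a prime ideal if and only if every nonzero ideal of R is a full rank lattice, i.e., every nonzero ideal of R, viewed as a ℤ-module, has rank exactly N. -/
theorem aux_iff {R : Type*} [CommRing R] (N : ℕ) (hN : 1 ≤ N)
    (b : Module.Basis (Fin N) ℤ R) :
    IsDomain R ↔ ∀ I : Ideal R, I ≠ ⊥ → Module.rank ℤ I = N := by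
  have hR : Module.rank ℤ R = N := by
    rw [rank_eq_card_basis b, Fintype.card_fin]
  constructor
  · intro hd I hI
    obtain ⟨a, haI, ha⟩ := Submodule.exists_mem_ne_zero_of_ne_bot hI
    apply le_antisymm
    · rw [← hR]
      exact LinearMap.rank_le_of_injective (I.subtype.restrictScalars ℤ)
        Subtype.val_injective
    · rw [← hR]
      refine LinearMap.rank_le_of_injective
        (((LinearMap.mulLeft ℤ a).codRestrict (I.restrictScalars ℤ)
          (fun x => I.mul_mem_right x haI) : R →ₗ[ℤ] (I.restrictScalars ℤ))) ?_
      intro x y h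
      exact mul_left_cancel₀ ha (congrArg Subtype.val h)
  · intro h
    have : Nontrivial R := by
      have : Nonempty (Fin N) := ⟨⟨0, hN⟩⟩
      exact b.repr.toEquiv.nontrivial
    have : NoZeroDivisors R := by
      refine ⟨fun {x y} hxy => ?_⟩
      by_contra! hc
      have h1 := h (Ideal.span {x}) (by simpa using hc.1)
      have hy : y ∈ LinearMap.ker (LinearMap.mulLeft R x) := by simpa using hxy
      have h2 := h (LinearMap.ker (LinearMap.mulLeft R x)) (by
        intro h0
        rw [h0] at hy
        exact hc.2 (by simpa using hy))
      have h3 := LinearMap.rank_range_add_rank_ker (LinearMap.mulLeft ℤ x)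
      have e1 : LinearMap.range (LinearMap.mulLeft ℤ x)
          = (Ideal.span {x}).restrictScalars ℤ := by
        ext z
        simp [Ideal.mem_span_singleton, dvd_def, eq_comm]
      have e2 : LinearMap.ker (LinearMap.mulLeft ℤ x)
          = (LinearMap.ker (LinearMap.mulLeft R x)).restrictScalars ℤ := by
        ext z
        simp
      rw [e1, e2, hR] at h3
      have h4 : (N : Cardinal) + N = N :=
        (congrArg₂ (· + ·) h1 h2).symm.trans h3
      have h5 : N + N = N := by exact_mod_cast h4
      omega
    exact NoZeroDivisors.to_isDomain R

/-- Let `𝔞 ⊆ ℤ[x_1,…,x_n]` be an ideal such that `R = ℤ[x_1,…,x_n]/𝔞` is a free,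
finitely generated `ℤ`-module of rank `N ≥ 1` (witnessed by a basis).  Then `𝔞` is
prime if and only if every nonzero ideal of `R` is a full rank lattice, i.e. has
rank exactly `N` as a `ℤ`-module (`Module.rank ℤ` is the supremum of the
cardinalities of linearly independent families). -/
theorem prime_iff_ideals_full_rank
    (n N : ℕ) (hN : 1 ≤ N) (𝔞 : Ideal (MvPolynomial (Fin n) ℤ))
    (b : Module.Basis (Fin N) ℤ (MvPolynomial (Fin n) ℤ ⧸ 𝔞)) :
    𝔞.IsPrime ↔
      ∀ 𝔄 : Ideal (MvPolynomial (Fin n) ℤ ⧸ 𝔞), 𝔄 ≠ ⊥ → Module.rank ℤ 𝔄 = N := by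
  rw [← Ideal.Quotient.isDomain_iff_prime]
  exact aux_iff N hN b
end

section
/- Let L be a subgroup of ℤ^n and let 𝔞_L ⊆ ℤ[x_1, …, x_n] be the lattice ideal of L. Then the quotient ring ℤ[x_1, …, x_n]/𝔞_L is a free ℤ-module, and consequently every ideal of ℤ[x_1, …, x_n]/𝔞_L is free as a ℤ-module (i.e., every ideal in ℤ[x_1, …, x_n]/𝔞_L is an ideal lattice). -/
open MvPolynomial

/-- The lattice ideal `𝔞_L ⊆ ℤ[x_1,…,x_n]` of a subgroup `L ⊆ ℤ^n`: the ideal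
generated by the binomials `x^(v⁺) − x^(v⁻)` for `v ∈ L`, where `v⁺_i = max(v_i, 0)`
and `v⁻_i = max(−v_i, 0)` (so `(v i).toNat` and `(-v i).toNat`). -/
noncomputable def latticeIdeal (n : ℕ) (L : Submodule ℤ (Fin n → ℤ)) : Ideal (MvPolynomial (Fin n) ℤ) :=
  Ideal.span ((fun v : Fin n → ℤ =>
    (∏ i, (X i : MvPolynomial (Fin n) ℤ) ^ (v i).toNat) -
      ∏ i, (X i : MvPolynomial (Fin n) ℤ) ^ (-v i).toNat) '' (L : Set (Fin n → ℤ)))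

theorem finsupp_int_submodule_free {ι : Type*} (N : Submodule ℤ (ι →₀ ℤ)) :
    Module.Free ℤ N := by
  classical
  obtain ⟨_, hwf⟩ := exists_wellOrder ι
  -- leading coefficient data
  have hx : ∀ i : ι, ∃ x ∈ N, (∀ j, i < j → x j = 0) ∧
      ∀ f ∈ N, (∀ j, i < j → f j = 0) → x i ∣ f i := by
    intro i
    let T : Submodule ℤ (ι →₀ ℤ) := N ⊓ ⨅ j : Set.Ioi i, LinearMap.ker (Finsupp.lapply (R := ℤ) (M := ℤ) j.1)
    have hT : ∀ f, f ∈ T ↔ f ∈ N ∧ ∀ j, i < j → f j = 0 := by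
      intro f
      simp [T, Submodule.mem_iInf]
    let J : Ideal ℤ := T.map (Finsupp.lapply i)
    obtain ⟨x, hxT, hxg⟩ := Submodule.mem_map.1 (Submodule.IsPrincipal.generator_mem J)
    refine ⟨x, ((hT x).1 hxT).1, ((hT x).1 hxT).2, fun f hf hf' => ?_⟩
    have h1 : f i ∈ J := Submodule.mem_map.2 ⟨f, (hT f).2 ⟨hf, hf'⟩, rfl⟩
    have h2 := (Submodule.IsPrincipal.mem_iff_generator_dvd J).1 h1
    rw [← hxg] at h2
    exact h2
  choose x hxN hxs hxd using hx
  let S := {i : ι // x i i ≠ 0}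
  let b : S → N := fun i => ⟨x i.1, hxN i.1⟩
  have hli : LinearIndependent ℤ b := by
    rw [linearIndependent_iff]
    intro g hg
    by_contra hne
    have hsup : g.support.Nonempty := Finsupp.support_nonempty_iff.2 hne
    obtain ⟨m, hm, hmax⟩ := g.support.exists_max_image (fun i : S => i.1) hsup
    have h1 : (((Finsupp.linearCombination ℤ b g : N) : ι →₀ ℤ)) m.1 = g m * x m.1 m.1 := by
      have h2 : ((Finsupp.linearCombination ℤ b g : N) : ι →₀ ℤ) =
          ∑ i ∈ g.support, g i • x i.1 := by
        rw [Finsupp.linearCombination_apply, Finsupp.sum]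
        simp [b]
      rw [h2, Finsupp.finset_sum_apply, Finset.sum_eq_single m]
      · simp
      · intro k hk hkm
        have hlt : k.1 < m.1 := lt_of_le_of_ne (hmax k hk) fun h => hkm (Subtype.ext h)
        simp [hxs k.1 m.1 hlt]
      · intro h
        exact absurd hm h
    rw [hg] at h1
    have h3 : g m * x m.1 m.1 = 0 := by rw [← h1]; rfl
    rcases mul_eq_zero.1 h3 with h | h
    · exact (Finsupp.mem_support_iff.1 hm) h
    · exact m.2 h
  have hspan : ∀ i : ι, ∀ f : ι →₀ ℤ, ∀ hf : f ∈ N, (∀ j, i < j → f j = 0) →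
      (⟨f, hf⟩ : N) ∈ Submodule.span ℤ (Set.range b) := by
    intro i
    induction i using hwf.induction with
    | _ i ih =>
    have step : ∀ f : ι →₀ ℤ, ∀ hf : f ∈ N, (∀ j, i ≤ j → f j = 0) →
        (⟨f, hf⟩ : N) ∈ Submodule.span ℤ (Set.range b) := by
      intro f hf h0
      by_cases hf0 : f = 0
      · subst hf0
        exact Submodule.zero_mem _
      · obtain ⟨m, hm, hmax⟩ := f.support.exists_max_image id (Finsupp.support_nonempty_iff.2 hf0)
        have hmi : m < i := by
          by_contra hc
          exact (Finsupp.mem_support_iff.1 hm) (h0 m (not_lt.1 hc))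
        refine ih m hmi f hf fun j hj => ?_
        by_contra hc
        exact absurd (hmax j (Finsupp.mem_support_iff.2 hc)) (not_le.2 hj)
    intro f hf h0
    obtain ⟨c, hc⟩ := hxd i f hf h0
    by_cases hxi : x i i = 0
    · refine step f hf fun j hj => ?_
      rcases hj.eq_or_lt with rfl | h
      · rw [hc, hxi, zero_mul]
      · exact h0 j h
    · have h1 := step (f - c • x i) (N.sub_mem hf (N.smul_mem c (hxN i))) (by
        intro j hj
        rcases hj.eq_or_lt with rfl | h
        · simp [hc, mul_comm]
        · simp [h0 j h, hxs i j h])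
      have h2 : (⟨f, hf⟩ : N) = ⟨f - c • x i, N.sub_mem hf (N.smul_mem c (hxN i))⟩ +
          c • b ⟨i, hxi⟩ := by
        apply Subtype.ext
        simp [b]
      rw [h2]
      exact Submodule.add_mem _ h1 (Submodule.smul_mem _ _ (Submodule.subset_span ⟨_, rfl⟩))
  refine Module.Free.of_basis (Module.Basis.mk hli ?_)
  rintro ⟨f, hf⟩ -
  by_cases hf0 : f = 0
  · subst hf0
    exact Submodule.zero_mem _
  · obtain ⟨m, hm, hmax⟩ := f.support.exists_max_image id (Finsupp.support_nonempty_iff.2 hf0)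
    refine hspan m f hf fun j hj => ?_
    by_contra hc
    exact absurd (hmax j (Finsupp.mem_support_iff.2 hc)) (not_le.2 hj)

theorem int_free_of_injective {M ι : Type*} [AddCommGroup M] [Module ℤ M]
    (f : M →ₗ[ℤ] ι →₀ ℤ) (hf : Function.Injective f) : Module.Free ℤ M := by
  have := finsupp_int_submodule_free (LinearMap.range f)
  exact Module.Free.of_equiv (LinearEquiv.ofInjective f hf).symm

theorem latticeIdeal_key (n : ℕ) (L : Submodule ℤ (Fin n → ℤ)) (a b : Fin n → ℕ)
    (h : (fun i => (a i : ℤ) - b i) ∈ L) :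
    (∏ i, (X i : MvPolynomial (Fin n) ℤ) ^ a i) - ∏ i, (X i : MvPolynomial (Fin n) ℤ) ^ b i
      ∈ latticeIdeal n L := by
  have h1 : (∏ i, (X i : MvPolynomial (Fin n) ℤ) ^ a i) - ∏ i, (X i : MvPolynomial (Fin n) ℤ) ^ b i
      = (∏ i, (X i : MvPolynomial (Fin n) ℤ) ^ (min (a i) (b i))) *
        ((∏ i, (X i : MvPolynomial (Fin n) ℤ) ^ ((a i : ℤ) - b i).toNat) -
      ∏ i, (X i : MvPolynomial (Fin n) ℤ) ^ (-((a i : ℤ) - b i)).toNat) := by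
    rw [mul_sub, ← Finset.prod_mul_distrib, ← Finset.prod_mul_distrib]
    congr 1 <;> refine Finset.prod_congr rfl fun i _ => ?_ <;> rw [← pow_add] <;> congr 1 <;> omega
  rw [h1]
  exact Ideal.mul_mem_left _ _ (Ideal.subset_span ⟨_, h, rfl⟩)

/-- The map to the group algebra of the quotient group. -/
noncomputable def latticePhi (n : ℕ) (L : Submodule ℤ (Fin n → ℤ)) :
    MvPolynomial (Fin n) ℤ →ₐ[ℤ] AddMonoidAlgebra ℤ ((Fin n → ℤ) ⧸ L) :=
  aeval fun i => AddMonoidAlgebra.single (L.mkQ (Pi.single i 1)) 1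

theorem latticePhi_prod (n : ℕ) (L : Submodule ℤ (Fin n → ℤ)) (a : Fin n → ℕ) :
    latticePhi n L (∏ i, (X i : MvPolynomial (Fin n) ℤ) ^ a i) =
      AddMonoidAlgebra.single (L.mkQ fun i => (a i : ℤ)) 1 := by
  have h2 : ∀ s : Finset (Fin n),
      (∏ i ∈ s, (AddMonoidAlgebra.single (a i • L.mkQ (Pi.single i 1)) (1 : ℤ) :
        AddMonoidAlgebra ℤ ((Fin n → ℤ) ⧸ L))) =
      AddMonoidAlgebra.single (∑ i ∈ s, a i • L.mkQ (Pi.single i 1)) 1 := by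
    intro s
    induction s using Finset.induction_on with
    | empty => simp [AddMonoidAlgebra.one_def]
    | insert i s hi ih =>
      rw [Finset.prod_insert hi, Finset.sum_insert hi, ih, AddMonoidAlgebra.single_mul_single,
        one_mul]
  have h3 : (fun i => (a i : ℤ)) = ∑ i, a i • (Pi.single i 1 : Fin n → ℤ) := by
    ext j
    simp [Finset.sum_apply, Pi.single_apply]
  rw [h3, map_sum, latticePhi]
  simp only [map_prod, map_pow, aeval_X, AddMonoidAlgebra.single_pow, one_pow, map_nsmul]
  exact h2 _

theorem latticePhi_ker (n : ℕ) (L : Submodule ℤ (Fin n → ℤ)) :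
    RingHom.ker (latticePhi n L) = latticeIdeal n L := by
  apply le_antisymm
  · classical
    let c : (Fin n →₀ ℕ) → (Fin n → ℤ) ⧸ L := fun d => L.mkQ fun i => (d i : ℤ)
    let s : (Fin n → ℤ) ⧸ L → (Fin n →₀ ℕ) := Function.invFun c
    have hs : ∀ d, c (s (c d)) = c d := fun d => Function.invFun_eq ⟨d, rfl⟩
    let m : (Fin n →₀ ℕ) → MvPolynomial (Fin n) ℤ ⧸ latticeIdeal n L :=
      fun d => Ideal.Quotient.mk _ (∏ i, X i ^ d i)
    let ψ : AddMonoidAlgebra ℤ ((Fin n → ℤ) ⧸ L) →ₗ[ℤ] MvPolynomial (Fin n) ℤ ⧸ latticeIdeal n L :=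
      (Finsupp.linearCombination ℤ fun q => m (s q)) ∘ₗ
        (AddMonoidAlgebra.coeffLinearEquiv ℤ).toLinearMap
    have hm : ∀ d : Fin n →₀ ℕ, (monomial d 1 : MvPolynomial (Fin n) ℤ) = ∏ i, X i ^ d i := by
      intro d
      rw [monomial_eq, Finsupp.prod_fintype _ _ (by simp)]
      simp
    have hcomp : ψ ∘ₗ (latticePhi n L).toLinearMap =
        ((Ideal.Quotient.mkₐ ℤ (latticeIdeal n L)).toLinearMap) := by
      apply MvPolynomial.linearMap_ext
      intro d
      apply LinearMap.ext_ring
      have h4 : m (s (c d)) = m d := by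
        refine Ideal.Quotient.eq.2 (latticeIdeal_key n L _ _ ?_)
        exact (Submodule.Quotient.eq L).1 (hs d)
      have h5 : ψ (latticePhi n L (monomial d 1)) = m d := by
        rw [hm, latticePhi_prod]
        simp only [ψ, LinearMap.comp_apply]
        refine Eq.trans ?_ h4
        simp [c]
      change ψ (latticePhi n L (monomial d 1)) = Ideal.Quotient.mk _ (monomial d 1)
      rw [h5, hm]
    intro p hp
    have h6 := LinearMap.congr_fun hcomp p
    rw [← Ideal.Quotient.eq_zero_iff_mem]
    change _ = Ideal.Quotient.mk _ p at h6
    rw [← h6]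
    change ψ (latticePhi n L p) = 0
    rw [(RingHom.mem_ker).1 hp, map_zero]
  · rw [latticeIdeal, Ideal.span_le]
    rintro _ ⟨v, hv, rfl⟩
    change latticePhi n L _ = 0
    rw [map_sub, latticePhi_prod n L fun i => (v i).toNat,
      latticePhi_prod n L fun i => (-v i).toNat, sub_eq_zero]
    congr 1
    refine (Submodule.Quotient.eq L).2 ?_
    have h7 : ((fun i => ((v i).toNat : ℤ)) - fun i => ((-v i).toNat : ℤ)) = v := by
      ext i
      simp only [Pi.sub_apply]
      omega
    rw [h7]
    exact hv

theorem latticeIdeal_quotient_free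
    (n : ℕ) (L : Submodule ℤ (Fin n → ℤ)) :
    Module.Free ℤ (MvPolynomial (Fin n) ℤ ⧸ latticeIdeal n L) ∧
      ∀ 𝔄 : Ideal (MvPolynomial (Fin n) ℤ ⧸ latticeIdeal n L), Module.Free ℤ 𝔄 := by
  let φ : MvPolynomial (Fin n) ℤ →+* AddMonoidAlgebra ℤ ((Fin n → ℤ) ⧸ L) := latticePhi n L
  have hk : ∀ a ∈ latticeIdeal n L, φ a = 0 := by
    intro a ha
    rw [← latticePhi_ker] at ha
    exact ha
  let g := Ideal.Quotient.lift (latticeIdeal n L) φ hk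
  have hg : Function.Injective g :=
    RingHom.lift_injective_of_ker_le_ideal _ hk (latticePhi_ker n L).le
  let f : (MvPolynomial (Fin n) ℤ ⧸ latticeIdeal n L) →ₗ[ℤ] (((Fin n → ℤ) ⧸ L) →₀ ℤ) :=
    (AddMonoidAlgebra.coeffLinearEquiv ℤ).toLinearMap ∘ₗ g.toIntAlgHom.toLinearMap
  have hf : Function.Injective f := (AddMonoidAlgebra.coeffLinearEquiv ℤ).injective.comp hg
  refine ⟨int_free_of_injective f hf, fun 𝔄 => ?_⟩
  exact int_free_of_injective (f ∘ₗ (𝔄.restrictScalars ℤ).subtype)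
    (hf.comp Subtype.val_injective)
end

section
/- Let L be a subgroup of ℤ^n and let 𝔞_L ⊆ ℤ[x_1, …, x_n] be the lattice ideal of L. Then 𝔞_L is a prime ideal if and only if L is saturated, i.e., L = Sat(L). -/
open MvPolynomial

/-- The monomial with exponent vector `m`. -/
noncomputable def latMon (n : ℕ) (m : Fin n → ℕ) : MvPolynomial (Fin n) ℤ :=
  ∏ i, (X i : MvPolynomial (Fin n) ℤ) ^ m i

/-- The map to the group ring of the quotient. -/
noncomputable def latPhi (n : ℕ) (L : Submodule ℤ (Fin n → ℤ)) :
    MvPolynomial (Fin n) ℤ →ₐ[ℤ] AddMonoidAlgebra ℤ ((Fin n → ℤ) ⧸ L) :=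
  aeval (fun i => AddMonoidAlgebra.single (L.mkQ (Pi.single i 1)) 1)

lemma latPhi_mon (n : ℕ) (L : Submodule ℤ (Fin n → ℤ)) (m : Fin n → ℕ) :
    latPhi n L (latMon n m) = AddMonoidAlgebra.single (L.mkQ (fun i => (m i : ℤ))) 1 := by
  simp only [latPhi, latMon, map_prod, map_pow, aeval_X, AddMonoidAlgebra.single_pow,
    AddMonoidAlgebra.prod_single, one_pow, Finset.prod_const_one]
  congr 1
  simp only [← map_nsmul, ← map_sum]
  congr 1
  ext j
  simp [Finset.sum_apply, Pi.single_apply]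

lemma latMon_sub_mem (n : ℕ) (L : Submodule ℤ (Fin n → ℤ)) (m k : Fin n → ℕ)
    (h : (fun i => (m i : ℤ) - k i) ∈ L) :
    latMon n m - latMon n k ∈ latticeIdeal n L := by
  have h1 := (latticeIdeal n L).mul_mem_left (latMon n (fun i => min (m i) (k i)))
    (Ideal.subset_span ⟨_, h, rfl⟩)
  convert h1 using 1
  simp only [latMon, mul_sub, ← Finset.prod_mul_distrib, ← pow_add]
  congr 1 <;>
  · refine Finset.prod_congr rfl fun i _ => ?_
    congr 1
    omega

lemma latMon_mem (n : ℕ) (L : Submodule ℤ (Fin n → ℤ)) (p : MvPolynomial (Fin n) ℤ) :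
    p ∈ latticeIdeal n L ↔ latPhi n L p = 0 := by
  classical
  constructor
  · intro hp
    have : latticeIdeal n L ≤ RingHom.ker (latPhi n L) := by
      refine Ideal.span_le.2 ?_
      rintro _ ⟨v, hv, rfl⟩
      change latPhi n L (latMon n (fun i => (v i).toNat) - latMon n (fun i => (-v i).toNat)) = 0
      rw [map_sub, latPhi_mon, latPhi_mon, sub_eq_zero]
      congr 1
      rw [← sub_eq_zero, ← map_sub]
      refine (Submodule.Quotient.mk_eq_zero L).2 ?_
      rw [SetLike.mem_coe] at hv
      convert hv using 1
      ext i
      simp only [Pi.sub_apply]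
      omega
    exact this hp
  · intro hp
    let f : ((Fin n → ℤ) ⧸ L) → MvPolynomial (Fin n) ℤ ⧸ latticeIdeal n L := fun g =>
      if h : ∃ m : Fin n → ℕ, L.mkQ (fun i => (m i : ℤ)) = g then
        Ideal.Quotient.mk _ (latMon n h.choose) else 0
    let ψ : AddMonoidAlgebra ℤ ((Fin n → ℤ) ⧸ L) →ₗ[ℤ] MvPolynomial (Fin n) ℤ ⧸ latticeIdeal n L :=
      (Finsupp.linearCombination ℤ f) ∘ₗ (AddMonoidAlgebra.coeffLinearEquiv ℤ).toLinearMap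
    have key : ∀ m : Fin n → ℕ, ψ (latPhi n L (latMon n m)) = Ideal.Quotient.mk _ (latMon n m) := by
      intro m
      have h : ∃ k : Fin n → ℕ, L.mkQ (fun i => (k i : ℤ)) = L.mkQ (fun i => (m i : ℤ)) := ⟨m, rfl⟩
      have h2 : ψ (latPhi n L (latMon n m)) = f (L.mkQ (fun i => (m i : ℤ))) := by
        rw [latPhi_mon]
        simp [ψ]
      rw [h2]
      simp only [f]
      rw [dif_pos h]
      refine Ideal.Quotient.eq.2 (latMon_sub_mem n L _ _ ?_)
      have h3 := h.choose_spec
      rw [← sub_eq_zero, ← map_sub] at h3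
      exact (Submodule.Quotient.mk_eq_zero L).1 h3
    have all : ∀ q : MvPolynomial (Fin n) ℤ, ψ (latPhi n L q) = Ideal.Quotient.mk _ q := by
      intro q
      induction q using MvPolynomial.induction_on' with
      | monomial u a =>
        have : monomial u a = a • latMon n u := by
          rw [monomial_eq, Finsupp.prod_fintype _ _ (by simp), latMon, smul_eq_C_mul]
        rw [this, map_smul, map_smul, key, map_zsmul]
      | add p q hp hq => rw [map_add, map_add, map_add, hp, hq]
    rw [← Ideal.Quotient.eq_zero_iff_mem, ← all, hp, map_zero]

/-- The lattice ideal `𝔞_L` is prime if and only if `L` is saturated, i.e.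
`L = Sat(L) = {α ∈ ℤ^n : dα ∈ L for some nonzero d ∈ ℤ}`. -/
theorem latticeIdeal_prime_iff_saturated
    (n : ℕ) (L : Submodule ℤ (Fin n → ℤ)) :
    (latticeIdeal n L).IsPrime ↔
      (L : Set (Fin n → ℤ)) = {α : Fin n → ℤ | ∃ d : ℤ, d ≠ 0 ∧ d • α ∈ L} := by
  constructor
  · intro hP
    refine Set.Subset.antisymm (fun α h => ⟨1, one_ne_zero, by simpa using h⟩) ?_
    rintro α ⟨d, hd, hα⟩
    have hN : (d.natAbs : ℤ) • α ∈ L := by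
      rcases Int.natAbs_eq d with h | h
      · rwa [← h]
      · rw [h, neg_smul] at hα
        exact neg_mem_iff.1 hα
    have hd' : d.natAbs ≠ 0 := by simpa using hd
    generalize d.natAbs = N at hN hd'
    let A := latMon n (fun i => (α i).toNat)
    let B := latMon n (fun i => (-α i).toNat)
    have hpow : A ^ N - B ^ N ∈ latticeIdeal n L := by
      have := latMon_sub_mem n L (fun i => (α i).toNat * N) (fun i => (-α i).toNat * N) (by
        convert hN using 1
        ext i
        have : α i = (α i).toNat - (-α i).toNat := by omega
        simp only [Pi.smul_apply, smul_eq_mul]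
        conv_rhs => rw [this]
        push_cast
        ring)
      simpa only [A, B, latMon, pow_mul, Finset.prod_pow] using this
    rw [← geom_sum₂_mul] at hpow
    rcases hP.mem_or_mem hpow with h | h
    · exfalso
      have hle : latticeIdeal n L ≤ RingHom.ker (aeval (R := ℤ) (fun _ : Fin n => (1 : ℤ))) := by
        refine Ideal.span_le.2 ?_
        rintro _ ⟨v, hv, rfl⟩
        simp [RingHom.mem_ker]
      have h0 := hle h
      rw [RingHom.mem_ker] at h0
      simp [A, B, latMon] at h0
      exact hd' h0
    · rw [latMon_mem, map_sub, sub_eq_zero] at h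
      simp only [A, B, latPhi_mon] at h
      have h3 := AddMonoidAlgebra.single_left_injective (one_ne_zero) h
      rw [← sub_eq_zero, ← map_sub] at h3
      have h4 := (Submodule.Quotient.mk_eq_zero L).1 h3
      rw [SetLike.mem_coe]
      convert h4 using 1
      ext i
      simp only [Pi.sub_apply]
      omega
  · intro hS
    have : IsAddTorsionFree ((Fin n → ℤ) ⧸ L) := by
      refine ⟨fun k hk => ?_⟩
      intro a b hab
      obtain ⟨x, rfl⟩ := L.mkQ_surjective a
      obtain ⟨y, rfl⟩ := L.mkQ_surjective b
      simp only [← map_nsmul] at hab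
      rw [← sub_eq_zero, ← map_sub] at hab ⊢
      refine (Submodule.Quotient.mk_eq_zero L).2 ?_
      have h1 := (Submodule.Quotient.mk_eq_zero L).1 hab
      change x - y ∈ (L : Set (Fin n → ℤ))
      rw [hS]
      refine ⟨k, by exact_mod_cast hk, ?_⟩
      rw [natCast_zsmul, nsmul_sub]
      exact h1
    have : AddMonoid.FG ((Fin n → ℤ) ⧸ L) :=
      AddGroup.fg_iff_addMonoid_fg.1 (Module.Finite.iff_addGroup_fg.1 inferInstance)
    have : IsDomain (AddMonoidAlgebra ℤ ((Fin n → ℤ) ⧸ L)) := NoZeroDivisors.to_isDomain _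
    have : latticeIdeal n L = RingHom.ker (latPhi n L) := by
      ext p
      rw [latMon_mem, RingHom.mem_ker]
    rw [this]
    exact RingHom.ker_isPrime _
end

section
/- Let r_1, …, r_n ≥ 2 be integers and N = (r_1 − 1)(r_2 − 1) ⋯ (r_n − 1). Let Ω be the set of tuples ω = (ω_1, …, ω_n) ∈ ℂ^n with ω_i^{r_i} = 1 and ω_i ≠ 1 for each i (i.e., the zero set of the ideal ⟨x_1^{r_1 − 1} + ⋯ + 1, …, x_n^{r_n − 1} + ⋯ + 1⟩). Let c be a family of integers indexed by exponent tuples β with 0 ≤ β_i ≤ r_i − 2, and for ω ∈ Ω set S(ω) = Σ_β c_β ω_1^{β_1} ⋯ ω_n^{β_n}. Then max_β |c_β| ≤ N · max_{ω ∈ Ω} |S(ω)| and max_{ω ∈ Ω} |S(ω)| ≤ N · max_β |c_β|; i.e., maxCoeff(α) ≤ N·maxsub(α) and maxsub(α) ≤ N·maxCoeff(α) for every element α of ℤ[x_1, …, x_n]/⟨x_1^{r_1 − 1} + ⋯ + 1, …, x_n^{r_n − 1} + ⋯ + 1⟩. -/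
theorem aux_one_dim (r : ℕ) (hr : 2 ≤ r) (b₀ : Fin (r - 1)) :
    ∃ (w g : Fin (r - 1) → ℂ), (∀ k, w k ^ r = 1 ∧ w k ≠ 1) ∧ (∀ k, ‖g k‖ ≤ 1) ∧
      ∀ b : Fin (r - 1), ∑ k, g k * w k ^ (b : ℕ) = if b = b₀ then 1 else 0 := by
  obtain ⟨m, rfl⟩ : ∃ m, r = m + 1 := ⟨r - 1, by omega⟩
  revert b₀
  rw [show m + 1 - 1 = m from rfl]
  intro b₀
  have hζ := Complex.isPrimitiveRoot_exp (m + 1) (by omega)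
  set ζ := Complex.exp (2 * Real.pi * Complex.I / ((m + 1 : ℕ) : ℂ)) with hζd
  clear_value ζ
  have h0 : ((m + 1 : ℕ) : ℂ) ≠ 0 := by exact_mod_cast Nat.succ_ne_zero m
  have hn : ‖ζ‖ = 1 := hζ.norm'_eq_one (by omega)
  have geo : ∀ a : ℕ, ¬ (m + 1 ∣ a) → ∑ k ∈ Finset.range (m + 1), (ζ ^ k) ^ a = 0 := by
    intro a ha
    have h1 : ζ ^ a ≠ 1 := fun h => ha (hζ.dvd_of_pow_eq_one a h)
    have h2 := mul_geom_sum (ζ ^ a) (m + 1)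
    rw [← pow_mul, mul_comm a, pow_mul, hζ.pow_eq_one, one_pow, sub_self] at h2
    have h3 := (mul_eq_zero.mp h2).resolve_left (sub_ne_zero.mpr h1)
    rw [← h3]
    exact Finset.sum_congr rfl fun k _ => by rw [← pow_mul, ← pow_mul, mul_comm]
  refine ⟨fun k => ζ ^ ((k : ℕ) + 1),
    fun k => ((ζ ^ ((k : ℕ) + 1)) ^ (m + 1 - b₀) - ζ ^ ((k : ℕ) + 1)) / ((m + 1 : ℕ) : ℂ),
    ?_, ?_, ?_⟩
  · intro k
    refine ⟨by rw [← pow_mul, mul_comm, pow_mul, hζ.pow_eq_one, one_pow], ?_⟩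
    exact hζ.pow_ne_one_of_pos_of_lt (by omega) (by omega)
  · intro k
    rw [norm_div, Complex.norm_natCast, div_le_one (by positivity)]
    refine (norm_sub_le _ _).trans ?_
    simp only [norm_pow, hn, one_pow]
    have : (2 : ℝ) ≤ ((m + 1 : ℕ) : ℝ) := by exact_mod_cast hr
    linarith
  · intro b
    have hb := b.2
    have hb₀ := b₀.2
    have key : ∑ k ∈ Finset.range (m + 1),
        ((ζ ^ k) ^ (m + 1 - b₀) - ζ ^ k) / ((m + 1 : ℕ) : ℂ) * (ζ ^ k) ^ (b : ℕ)
        = if b = b₀ then 1 else 0 := by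
      have e : ∀ k ∈ Finset.range (m + 1),
          ((ζ ^ k) ^ (m + 1 - b₀) - ζ ^ k) / ((m + 1 : ℕ) : ℂ) * (ζ ^ k) ^ (b : ℕ)
          = (((ζ ^ k) ^ (m + 1 - b₀ + b) - (ζ ^ k) ^ ((b : ℕ) + 1))) / ((m + 1 : ℕ) : ℂ) := by
        intro k _
        rw [pow_add, pow_succ]
        ring
      rw [Finset.sum_congr rfl e, ← Finset.sum_div, Finset.sum_sub_distrib,
        geo ((b : ℕ) + 1) (fun h => by have := Nat.le_of_dvd (by omega) h; omega), sub_zero]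
      split_ifs with h
      · subst h
        have : m + 1 - (b : ℕ) + b = m + 1 := by omega
        rw [this]
        have e2 : ∀ k ∈ Finset.range (m + 1), (ζ ^ k) ^ (m + 1) = 1 := fun k _ => by
          rw [← pow_mul, mul_comm, pow_mul, hζ.pow_eq_one, one_pow]
        rw [Finset.sum_congr rfl e2, Finset.sum_const, Finset.card_range, nsmul_eq_mul, mul_one,
          div_self h0]
      · rw [geo, zero_div]
        rintro ⟨q, hq⟩
        have hne : (b : ℕ) ≠ b₀ := fun h' => h (Fin.ext h')
        rcases q with _ | _ | q
        · omega
        · omega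
        · have : (m + 1) * (q + 1 + 1) = (m + 1) * q + 2 * (m + 1) := by ring
          have : 0 ≤ (m + 1) * q := Nat.zero_le _
          omega
    rw [Finset.sum_range_succ'] at key
    simp only [pow_zero, one_pow, sub_self, zero_div, zero_mul, add_zero] at key
    rw [← key]
    exact Fin.sum_univ_eq_sum_range (fun k => ((ζ ^ (k + 1)) ^ (m + 1 - (b₀ : ℕ)) - ζ ^ (k + 1)) /
      ((m + 1 : ℕ) : ℂ) * (ζ ^ (k + 1)) ^ (b : ℕ)) m

/-- Let `r_1, …, r_n ≥ 2`, `N = (r_1 − 1) ⋯ (r_n − 1)`, and let `Ω` be the set of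
tuples `ω ∈ ℂ^n` with `ω_i^{r_i} = 1` and `ω_i ≠ 1` (the variety of
`⟨x_1^{r_1−1} + ⋯ + 1, …, x_n^{r_n−1} + ⋯ + 1⟩`). For integer coefficients `c`
indexed by exponent tuples `β` with `0 ≤ β_i ≤ r_i − 2`, and
`S(ω) = Σ_β c_β ω^β`, we have `max_β |c_β| ≤ N · max_{ω ∈ Ω} |S(ω)|` and
`max_{ω ∈ Ω} |S(ω)| ≤ N · max_β |c_β|` — i.e. `maxCoeff(α) ≤ N·maxsub(α)` and
`maxsub(α) ≤ N·maxCoeff(α)` for every `α` in the quotient ring. -/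
theorem maxCoeff_maxsub_bounds_for_cyclotomic_like_ideal
    (n : ℕ) (r : Fin n → ℕ) (hr : ∀ i, 2 ≤ r i)
    (c : ((i : Fin n) → Fin (r i - 1)) → ℤ) :
    (∀ β₀ : (i : Fin n) → Fin (r i - 1),
      (|c β₀| : ℝ) ≤ (∏ i, (r i - 1) : ℕ) *
        ⨆ ω : {ω : Fin n → ℂ // ∀ i, ω i ^ r i = 1 ∧ ω i ≠ 1},
          ‖∑ β : (i : Fin n) → Fin (r i - 1),
              (c β : ℂ) * ∏ i, (ω : Fin n → ℂ) i ^ (β i : ℕ)‖) ∧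
    (∀ ω : Fin n → ℂ, (∀ i, ω i ^ r i = 1 ∧ ω i ≠ 1) →
      ‖∑ β : (i : Fin n) → Fin (r i - 1), (c β : ℂ) * ∏ i, ω i ^ (β i : ℕ)‖ ≤
        (∏ i, (r i - 1) : ℕ) *
          ((Finset.univ.sup fun β : (i : Fin n) → Fin (r i - 1) => (c β).natAbs : ℕ) : ℝ)) := by
  have second : ∀ ω : Fin n → ℂ, (∀ i, ω i ^ r i = 1 ∧ ω i ≠ 1) →
      ‖∑ β : (i : Fin n) → Fin (r i - 1), (c β : ℂ) * ∏ i, ω i ^ (β i : ℕ)‖ ≤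
        (∏ i, (r i - 1) : ℕ) *
          ((Finset.univ.sup fun β : (i : Fin n) → Fin (r i - 1) => (c β).natAbs : ℕ) : ℝ) := by
    intro ω hω
    have hn : ∀ i, ‖ω i‖ = 1 := fun i =>
      Complex.norm_eq_one_of_pow_eq_one (hω i).1 (by have := hr i; omega)
    refine (norm_sum_le_of_le (f := fun β : (i : Fin n) → Fin (r i - 1) =>
      (c β : ℂ) * ∏ i, ω i ^ (β i : ℕ)) Finset.univ (n := fun _ =>
      ((Finset.univ.sup fun β : (i : Fin n) → Fin (r i - 1) => (c β).natAbs : ℕ) : ℝ)) ?_).trans ?_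
    · intro β _
      rw [norm_mul, norm_prod]
      simp only [norm_pow, hn, one_pow, Finset.prod_const_one, mul_one]
      rw [Complex.norm_intCast, ← Int.cast_abs, Int.abs_eq_natAbs, Int.cast_natCast]
      exact_mod_cast Finset.le_sup (f := fun β : (i : Fin n) → Fin (r i - 1) => (c β).natAbs)
        (Finset.mem_univ β)
    · rw [Finset.sum_const, nsmul_eq_mul, Finset.card_univ, Fintype.card_pi]
      simp only [Fintype.card_fin]
      exact le_rfl
  refine ⟨?_, second⟩
  intro β₀
  choose w g hw hg hs using fun i => aux_one_dim (r i) (hr i) (β₀ i)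
  have hbdd : BddAbove (Set.range fun ω : {ω : Fin n → ℂ // ∀ i, ω i ^ r i = 1 ∧ ω i ≠ 1} =>
      ‖∑ β : (i : Fin n) → Fin (r i - 1), (c β : ℂ) * ∏ i, (ω : Fin n → ℂ) i ^ (β i : ℕ)‖) := by
    refine ⟨(∏ i, (r i - 1) : ℕ) *
      ((Finset.univ.sup fun β : (i : Fin n) → Fin (r i - 1) => (c β).natAbs : ℕ) : ℝ), ?_⟩
    rintro _ ⟨ω, rfl⟩
    exact second ω.1 ω.2
  have key : (c β₀ : ℂ) = ∑ κ : (i : Fin n) → Fin (r i - 1), (∏ i, g i (κ i)) *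
      ∑ β : (i : Fin n) → Fin (r i - 1), (c β : ℂ) * ∏ i, w i (κ i) ^ (β i : ℕ) := by
    simp only [Finset.mul_sum]
    rw [Finset.sum_comm]
    have e : ∀ β : (i : Fin n) → Fin (r i - 1),
        ∑ κ : (i : Fin n) → Fin (r i - 1), (∏ i, g i (κ i)) *
          ((c β : ℂ) * ∏ i, w i (κ i) ^ (β i : ℕ)) = if β = β₀ then (c β : ℂ) else 0 := by
      intro β
      have e1 : ∏ i, ∑ k, g i k * w i k ^ (β i : ℕ) = if β = β₀ then (1 : ℂ) else 0 := by
        simp only [hs]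
        split_ifs with h
        · subst h; simp
        · obtain ⟨i, hi⟩ := Function.ne_iff.mp h
          exact Finset.prod_eq_zero (Finset.mem_univ i) (if_neg hi)
      rw [Finset.prod_univ_sum, Fintype.piFinset_univ] at e1
      calc _ = (c β : ℂ) * ∑ κ : (i : Fin n) → Fin (r i - 1),
              ∏ i, g i (κ i) * w i (κ i) ^ (β i : ℕ) := by
            rw [Finset.mul_sum]
            refine Finset.sum_congr rfl fun κ _ => ?_
            rw [Finset.prod_mul_distrib]
            ring
        _ = _ := by rw [e1]; simp
    rw [Finset.sum_congr rfl fun β _ => e β]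
    simp
  have habs : ‖(c β₀ : ℂ)‖ = |(c β₀ : ℝ)| := Complex.norm_intCast _
  push_cast
  rw [← habs, key]
  refine (norm_sum_le_of_le _ (n := fun _ =>
    ⨆ ω : {ω : Fin n → ℂ // ∀ i, ω i ^ r i = 1 ∧ ω i ≠ 1},
          ‖∑ β : (i : Fin n) → Fin (r i - 1),
              (c β : ℂ) * ∏ i, (ω : Fin n → ℂ) i ^ (β i : ℕ)‖) ?_).trans ?_
  · intro κ _
    rw [norm_mul, norm_prod]
    refine (mul_le_of_le_one_left (norm_nonneg _)
      (Finset.prod_le_one (fun i _ => norm_nonneg _) fun i _ => hg i _)).trans ?_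
    exact le_ciSup hbdd ⟨fun i => w i (κ i), fun i => hw i _⟩
  · rw [Finset.sum_const, nsmul_eq_mul, Finset.card_univ, Fintype.card_pi]
    simp only [Fintype.card_fin]
    push_cast
    exact le_rfl
end
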